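/- arXiv:2103.02893 — 9 statements merged into one kernel-verified Lean document; each statement's English description precedes it below -/
import Mathlib

section
/- Let Z and Y be finite nonempty sets and T a label transition matrix from Z to Y. A weak-label loss l_W : P(Z) × Y → ℝ̄ is T-proper (respectively strictly T-proper) if and only if the loss function l : P(Z) × Z → ℝ̄ defined by l(q, z) = Σ_{y∈Y} T_{yz} l_W(q, y) is proper (respectively strictly proper). -/
/-! The theorem rests on a single identity in `EReal`,
`∑ y, (T p) y * f y = ∑ z, p z * ∑ y, T y z * f y`, valid for every `f : Y → EReal`: both
distributivity laws it needs hold without any finiteness assumption on `f`, because all the real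
coefficients involved are nonnegative and finite. Hence the two risk functions coincide on the
simplex, and (strict) `T`-properness and (strict) properness are the same condition. -/

open scoped BigOperators
noncomputable section

/-- The probability simplex over a finite label set `Z`. -/
def Simplex (Z : Type*) [Fintype Z] : Set (Z → ℝ) :=
  {p | ∑ z, p z = 1 ∧ ∀ z, 0 ≤ p z}

/-- The hyperplane `1_Z^⊥ = {v : Σ_z v_z = 0}`. -/
def SumZero (Z : Type*) [Fintype Z] : Set (Z → ℝ) :=
  {v | ∑ z, v z = 0}

/-- A loss `l : P(Z) × Z → ℝ̄` is proper. -/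
def Proper {Z : Type*} [Fintype Z] (l : (Z → ℝ) → Z → EReal) : Prop :=
  ∀ p ∈ Simplex Z, ∀ q ∈ Simplex Z,
    ∑ z, (p z : EReal) * l p z ≤ ∑ z, (p z : EReal) * l q z

/-- A loss is strictly proper. -/
def StrictlyProper {Z : Type*} [Fintype Z] (l : (Z → ℝ) → Z → EReal) : Prop :=
  Proper l ∧ ∀ p ∈ Simplex Z, ∀ q ∈ Simplex Z,
    ∑ z, (p z : EReal) * l p z = ∑ z, (p z : EReal) * l q z → p = q

/-- A loss is regular: finite everywhere except possibly `+∞` when `q z = 0`. -/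
def Regular {Z : Type*} [Fintype Z] (l : (Z → ℝ) → Z → EReal) : Prop :=
  ∀ q ∈ Simplex Z, ∀ z, l q z ≠ ⊥ ∧ (l q z = ⊤ → q z = 0)

/-- A label transition matrix: nonnegative entries, columns summing to 1. -/
def TransitionMatrix {Z Y : Type*} [Fintype Z] [Fintype Y] (T : Matrix Y Z ℝ) : Prop :=
  (∀ y z, 0 ≤ T y z) ∧ ∀ z, ∑ y, T y z = 1

/-- A weak-label loss is `T`-proper. -/
def TProper {Z Y : Type*} [Fintype Z] [Fintype Y] (T : Matrix Y Z ℝ)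
    (lW : (Z → ℝ) → Y → EReal) : Prop :=
  ∀ p ∈ Simplex Z, ∀ q ∈ Simplex Z,
    ∑ y, ((T.mulVec p y : ℝ) : EReal) * lW p y ≤
      ∑ y, ((T.mulVec p y : ℝ) : EReal) * lW q y

/-- A weak-label loss is strictly `T`-proper. -/
def StrictlyTProper {Z Y : Type*} [Fintype Z] [Fintype Y] (T : Matrix Y Z ℝ)
    (lW : (Z → ℝ) → Y → EReal) : Prop :=
  TProper T lW ∧ ∀ p ∈ Simplex Z, ∀ q ∈ Simplex Z,
    ∑ y, ((T.mulVec p y : ℝ) : EReal) * lW p y =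
      ∑ y, ((T.mulVec p y : ℝ) : EReal) * lW q y → p = q

/-- A nonnegative real scalar distributes over finite sums in `EReal`, even when the sum mixes
`⊤` and `⊥`. -/
lemma EReal_coe_mul_sum {ι : Type*} (s : Finset ι) {c : ℝ} (hc : 0 ≤ c) (f : ι → EReal) :
    (c : EReal) * ∑ i ∈ s, f i = ∑ i ∈ s, (c : EReal) * f i := by
  classical
  induction s using Finset.induction_on with
  | empty => simp
  | insert a s ha ih =>
    rw [Finset.sum_insert ha, Finset.sum_insert ha, ← ih]
    exact EReal.left_distrib_of_nonneg_of_ne_top (EReal.coe_nonneg.2 hc) (EReal.coe_ne_top c) _ _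

lemma EReal_coe_sum_mul {ι : Type*} (s : Finset ι) {c : ι → ℝ} (hc : ∀ i, 0 ≤ c i) (x : EReal) :
    ((∑ i ∈ s, c i : ℝ) : EReal) * x = ∑ i ∈ s, (c i : EReal) * x := by
  classical
  induction s using Finset.induction_on with
  | empty => simp
  | insert a s ha ih =>
    rw [Finset.sum_insert ha, Finset.sum_insert ha, ← ih, EReal.coe_add]
    exact EReal.right_distrib_of_nonneg (EReal.coe_nonneg.2 (hc a))
      (EReal.coe_nonneg.2 (Finset.sum_nonneg fun i _ => hc i))

/-- The weak-label risk at `T p` equals the risk at `p` of the induced loss. -/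
lemma weak_risk_eq {Z Y : Type*} [Fintype Z] [Fintype Y] {T : Matrix Y Z ℝ}
    (hT : ∀ y z, 0 ≤ T y z) {p : Z → ℝ} (hp : ∀ z, 0 ≤ p z) (f : Y → EReal) :
    ∑ y, ((T.mulVec p y : ℝ) : EReal) * f y =
      ∑ z, (p z : EReal) * ∑ y, ((T y z : ℝ) : EReal) * f y := by
  have hl : ∀ y, ((T.mulVec p y : ℝ) : EReal) * f y =
      ∑ z, ((T y z * p z : ℝ) : EReal) * f y := fun y =>
    EReal_coe_sum_mul _ (fun z => mul_nonneg (hT y z) (hp z)) _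
  simp_rw [hl]
  rw [Finset.sum_comm]
  refine Finset.sum_congr rfl fun z _ => ?_
  rw [EReal_coe_mul_sum _ (hp z)]
  refine Finset.sum_congr rfl fun y _ => ?_
  rw [mul_comm (T y z), EReal.coe_mul, mul_assoc]

/-- **Lemma**: `l_W` is (strictly) `T`-proper iff the induced loss
`l(q,z) = Σ_y T_{yz} l_W(q,y)` is (strictly) proper. -/
theorem tproper_iff_proper {Z Y : Type*} [Fintype Z] [Fintype Y]
    (T : Matrix Y Z ℝ) (hT : TransitionMatrix T) (lW : (Z → ℝ) → Y → EReal) :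
    (TProper T lW ↔ Proper (fun q z => ∑ y, ((T y z : ℝ) : EReal) * lW q y)) ∧
    (StrictlyTProper T lW ↔
      StrictlyProper (fun q z => ∑ y, ((T y z : ℝ) : EReal) * lW q y)) := by
  have key : ∀ p ∈ Simplex Z, ∀ f : Y → EReal,
      ∑ y, ((T.mulVec p y : ℝ) : EReal) * f y =
        ∑ z, (p z : EReal) * ∑ y, ((T y z : ℝ) : EReal) * f y :=
    fun p hp f => weak_risk_eq hT.1 hp.2 f
  have h1 : TProper T lW ↔ Proper (fun q z => ∑ y, ((T y z : ℝ) : EReal) * lW q y) := by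
    refine forall₂_congr fun p hp => forall₂_congr fun q _ => ?_
    rw [key p hp, key p hp]
  refine ⟨h1, and_congr h1 ?_⟩
  refine forall₂_congr fun p hp => forall₂_congr fun q _ => ?_
  rw [key p hp, key p hp]
end
end

section
/- Let Z and Y be finite nonempty sets, T a label transition matrix from Z to Y, and R a reconstruction matrix of T. Then for every vector v in the hyperplane 1_Z^⊥ = {v ∈ ℝ^Z : Σ_z v_z = 0}, it holds that max_{y∈Y} (R^⊤ v)_y ≥ max_{z∈Z} v_z. -/
/-!
Since `R * T = 1`, transposing gives `v = Tᵀ (Rᵀ v)`. Each column of `T` is a probability vector,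
so every coordinate `v z` is a convex combination of the coordinates of `Rᵀ v`, hence at most
their maximum. All suprema are over finite nonempty families, so they are genuine maxima.
-/

open scoped BigOperators
noncomputable section

/-- **Lemma**: for a reconstruction matrix `R` of a label transition matrix `T` and any
`v ∈ 1_Z^⊥`, `max_y (R^⊤ v)_y ≥ max_z v_z`. -/
theorem max_Rtv_ge_max_v {Z Y : Type*} [Fintype Z] [Fintype Y]
    [Nonempty Z] [Nonempty Y] [DecidableEq Z]
    (T : Matrix Y Z ℝ) (hT : TransitionMatrix T)
    (R : Matrix Z Y ℝ) (hR : R * T = 1)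
    (v : Z → ℝ) (hv : v ∈ SumZero Z) :
    (⨆ z, v z) ≤ ⨆ y, ∑ z, R z y * v z := by
  refine ciSup_le fun z => ?_
  have key : v z = ∑ y, T y z * ∑ z', R z' y * v z' := by
    have h : ∀ z', ∑ y, R z' y * T y z = if z' = z then 1 else 0 := fun z' => by
      rw [← Matrix.mul_apply, hR, Matrix.one_apply]
    calc v z = ∑ z', (∑ y, R z' y * T y z) * v z' := by simp [h]
      _ = ∑ y, T y z * ∑ z', R z' y * v z' := by
        simp_rw [Finset.sum_mul, Finset.mul_sum]
        rw [Finset.sum_comm]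
        exact Finset.sum_congr rfl fun _ _ => Finset.sum_congr rfl fun _ _ => by ring
  -- `v z` is the average of `Rᵀ v` under the probability vector `T · z`.
  calc v z = ∑ y, T y z * ∑ z', R z' y * v z' := key
    _ ≤ ∑ y, T y z * ⨆ y, ∑ z', R z' y * v z' :=
      Finset.sum_le_sum fun y _ => mul_le_mul_of_nonneg_left
        (le_ciSup (f := fun y => ∑ z', R z' y * v z') (Set.finite_range _).bddAbove y)
        (hT.1 y z)
    _ = ⨆ y, ∑ z', R z' y * v z' := by rw [← Finset.sum_mul, hT.2 z, one_mul]
end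
end

section
/- Let Z and Y be finite nonempty sets, T a label transition matrix from Z to Y, R a reconstruction matrix of T, and F : C → ℝ a closed convex function on a convex subset C of 1_Z^⊥ such that v ↦ F(v) − max_{y∈Y} (R^⊤ v)_y is bounded from below on C. Then the weak-label loss l_W(q, y) = λ_{F,R}(∇F*(q), y) = −(R^⊤ ∇F*(q))_y + F(∇F*(q)), where ∇F* is any subgradient selection of the convex conjugate F*, is T-proper and bounded from below on P(Z) × Y. -/
/-!
Write `⟨p, v⟩ = ∑ z, p z * v z`. Since `R T = 1` and the entries of `T p` sum to `1`, the expected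
weak-label loss is `∑ y, (T p)_y * l_W(q, y) = F(g q) - ⟨p, g q⟩`. Hence `T`-properness says exactly
that `g p` maximizes `v ↦ ⟨p, v⟩ - F v` over the points `g q`. In fact a subgradient `v ∈ C` of `F*`
at `p` maximizes it over all of `C` (`ConjSubgradAt.maximizes`). This is the Fenchel–Moreau
inequality `F v ≤ F** v`: Hahn–Banach separates `(v, t)` with `t < F v` from the closed convex
epigraph, and the slope of the separating affine function is the point at which the subgradient
inequality is used. Going through real numbers `t < F v` also avoids having to know beforehand that
`F*` is finite at `p`.

The lower bound holds because `(Rᵀ v)_y ≤ max_y (Rᵀ v)_y`.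
-/

open scoped BigOperators
noncomputable section

/-- `F` is a closed convex function on `C`: convex on `C` with closed epigraph. -/
def ClosedConvexOn {Z : Type*} [Fintype Z] (C : Set (Z → ℝ)) (F : (Z → ℝ) → ℝ) : Prop :=
  ConvexOn ℝ C F ∧ IsClosed {x : (Z → ℝ) × ℝ | x.1 ∈ C ∧ F x.1 ≤ x.2}

/-- The convex conjugate `F*(p) = sup_{v ∈ C} [⟨p, v⟩ − F(v)]`, with values in `ℝ̄`. -/
def conj {Z : Type*} [Fintype Z] (C : Set (Z → ℝ)) (F : (Z → ℝ) → ℝ)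
    (p : Z → ℝ) : EReal :=
  ⨆ v : C, (((∑ z, p z * (v : Z → ℝ) z) - F (v : Z → ℝ) : ℝ) : EReal)

/-- `u` is a subgradient of the convex conjugate `F*` at `p`. -/
def ConjSubgradAt {Z : Type*} [Fintype Z] (C : Set (Z → ℝ)) (F : (Z → ℝ) → ℝ)
    (p : Z → ℝ) (u : Z → ℝ) : Prop :=
  ∀ p' : Z → ℝ,
    conj C F p + ((∑ z, u z * (p' z - p z) : ℝ) : EReal) ≤ conj C F p'

/-- For `v ∈ C` and `t < F v`, some affine minorant of `F` on `C`, of slope `a`, takes the value `t`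
at `v`. The separating hyperplane is not vertical because `(v, F v)`
itself lies in the epigraph. -/
lemma ClosedConvexOn.exists_affine_minorant {Z : Type*} [Fintype Z] [DecidableEq Z]
    {C : Set (Z → ℝ)} {F : (Z → ℝ) → ℝ} (hF : ClosedConvexOn C F)
    {v : Z → ℝ} (hv : v ∈ C) {t : ℝ} (ht : t < F v) :
    ∃ a : Z → ℝ, ∀ x ∈ C, (∑ z, a z * x z) - F x ≤ (∑ z, a z * v z) - t := by
  obtain ⟨f, u, hfu, huv⟩ := geometric_hahn_banach_closed_point (x := (v, t))
    hF.1.convex_epigraph hF.2 (by simp [ht])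
  have hf : ∀ (x : Z → ℝ) (s : ℝ),
      f (x, s) = (∑ z, f (Pi.single z 1, 0) * x z) + s * f (0, 1) := by
    intro x s
    have h1 : (x, s) = (x, (0 : ℝ)) + s • ((0 : Z → ℝ), (1 : ℝ)) := by simp
    have h2 : (x, (0 : ℝ)) = ∑ z, x z • (Pi.single z (1 : ℝ), (0 : ℝ)) := by
      refine Prod.ext ?_ ?_
      · simp only [Prod.fst_sum, Prod.smul_fst]
        exact pi_eq_sum_univ' x
      · simp [Prod.snd_sum]
    rw [h1, map_add, map_smul, h2, map_sum]
    simp only [map_smul, smul_eq_mul, mul_comm]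
  set β := f (0, 1)
  have hβ : β < 0 := by
    have h := (hfu (v, F v) ⟨hv, le_rfl⟩).trans huv
    rw [hf, hf] at h
    nlinarith
  refine ⟨fun z => f (Pi.single z 1, 0) / (-β), fun x hx => ?_⟩
  have h := (hfu (x, F x) ⟨hx, le_rfl⟩).trans huv
  rw [hf, hf] at h
  have hs : ∀ w : Z → ℝ, ∑ z, f (Pi.single z 1, 0) / (-β) * w z =
      (∑ z, f (Pi.single z 1, 0) * w z) / (-β) := by
    intro w
    rw [Finset.sum_div]
    exact Finset.sum_congr rfl fun z _ => by ring
  rw [hs, hs, sub_le_sub_iff, ← sub_le_iff_le_add, add_sub_assoc, ← le_sub_iff_add_le',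
    ← sub_div, le_div_iff₀ (neg_pos.2 hβ)]
  linarith

/-- A subgradient `v ∈ C` of `F*` at `p` attains the supremum defining `F* p`. -/
lemma ConjSubgradAt.maximizes {Z : Type*} [Fintype Z] [DecidableEq Z]
    {C : Set (Z → ℝ)} {F : (Z → ℝ) → ℝ} (hF : ClosedConvexOn C F)
    {p v : Z → ℝ} (hv : v ∈ C) (hsub : ConjSubgradAt C F p v) {x : Z → ℝ} (hx : x ∈ C) :
    (∑ z, p z * x z) - F x ≤ (∑ z, p z * v z) - F v := by
  suffices h : ∀ t < F v, t ≤ (∑ z, p z * v z) - ((∑ z, p z * x z) - F x) by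
    have := le_of_forall_lt_imp_le_of_dense h
    linarith
  intro t ht
  obtain ⟨a, ha⟩ := hF.exists_affine_minorant hv ht
  have h1 : conj C F a ≤ (((∑ z, a z * v z) - t : ℝ) : EReal) :=
    iSup_le fun w => EReal.coe_le_coe_iff.2 (ha w w.2)
  have h2 : (((∑ z, p z * x z) - F x : ℝ) : EReal) ≤ conj C F p :=
    le_iSup (fun w : C => (((∑ z, p z * (w : Z → ℝ) z) - F (w : Z → ℝ) : ℝ) : EReal)) ⟨x, hx⟩
  have h3 := (add_le_add_left h2 _).trans ((hsub a).trans h1)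
  rw [← EReal.coe_add, EReal.coe_le_coe_iff] at h3
  have h4 : ∑ z, v z * (a z - p z) = (∑ z, a z * v z) - ∑ z, p z * v z := by
    rw [← Finset.sum_sub_distrib]
    exact Finset.sum_congr rfl fun z _ => by ring
  linarith

/-- The expectation under `T p` of the loss `y ↦ -(Rᵀ v)_y + c`. -/
lemma expected_weak_loss {Z Y : Type*} [Fintype Z] [Fintype Y] [DecidableEq Z]
    {T : Matrix Y Z ℝ} (hT : TransitionMatrix T) {R : Matrix Z Y ℝ} (hR : R * T = 1)
    {p : Z → ℝ} (hp : p ∈ Simplex Z) (v : Z → ℝ) (c : ℝ) :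
    ∑ y, T.mulVec p y * (-(∑ z, R z y * v z) + c) = c - ∑ z, p z * v z := by
  have h1 : ∑ y, T.mulVec p y = 1 := by
    simp only [Matrix.mulVec, dotProduct]
    rw [Finset.sum_comm]
    simp only [← Finset.sum_mul, hT.2, one_mul]
    exact hp.1
  have h2 : R.mulVec (T.mulVec p) = p := by
    rw [Matrix.mulVec_mulVec, hR, Matrix.one_mulVec]
  have h3 : ∑ y, T.mulVec p y * ∑ z, R z y * v z = ∑ z, p z * v z := by
    conv_rhs => rw [← h2]
    simp only [Matrix.mulVec, dotProduct, Finset.mul_sum, Finset.sum_mul]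
    rw [Finset.sum_comm]
    refine Finset.sum_congr rfl fun z _ => Finset.sum_congr rfl fun y _ =>
      Finset.sum_congr rfl fun z' _ => by ring
  simp only [mul_add, mul_neg, Finset.sum_add_distrib, Finset.sum_neg_distrib, h3]
  rw [← Finset.sum_mul, h1]
  ring

/-- **Theorem (lower-bounded `T`-proper losses)**: if `F(v) − max_y (R^⊤ v)_y` is bounded
from below on `C`, then the weak-label loss
`l_W(q,y) = −(R^⊤ ∇F*(q))_y + F(∇F*(q))` is `T`-proper and bounded from below
on `P(Z) × Y`, for any subgradient selection `∇F*` of `F*`. -/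
theorem lower_bounded_tproper {Z Y : Type*} [Fintype Z] [Fintype Y]
    [Nonempty Z] [Nonempty Y] [DecidableEq Z]
    (T : Matrix Y Z ℝ) (hT : TransitionMatrix T)
    (R : Matrix Z Y ℝ) (hR : R * T = 1)
    (C : Set (Z → ℝ)) (hCsub : C ⊆ SumZero Z) (hCconv : Convex ℝ C)
    (F : (Z → ℝ) → ℝ) (hF : ClosedConvexOn C F)
    (hbdd : BddBelow ((fun v => F v - ⨆ y, ∑ z, R z y * v z) '' C))
    (g : (Z → ℝ) → (Z → ℝ))
    (hg : ∀ q ∈ Simplex Z, g q ∈ C ∧ ConjSubgradAt C F q (g q)) :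
    TProper T (fun q y => ((-(∑ z, R z y * g q z) + F (g q) : ℝ) : EReal)) ∧
    ∃ b : ℝ, ∀ q ∈ Simplex Z, ∀ y : Y, b ≤ -(∑ z, R z y * g q z) + F (g q) := by
  refine ⟨fun p hp q hq => ?_, ?_⟩
  · have hcoe : ∀ r : Z → ℝ,
        ∑ y, ((T.mulVec p y : ℝ) : EReal) * ((-(∑ z, R z y * g r z) + F (g r) : ℝ) : EReal) =
          ((F (g r) - ∑ z, p z * g r z : ℝ) : EReal) := by
      intro r
      rw [← expected_weak_loss hT hR hp (g r) (F (g r))]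
      simp only [← EReal.coe_mul]
      exact (map_sum (⟨⟨Real.toEReal, EReal.coe_zero⟩, EReal.coe_add⟩ : ℝ →+ EReal) _ _).symm
    rw [hcoe, hcoe, EReal.coe_le_coe_iff]
    have := ConjSubgradAt.maximizes hF (hg p hp).1 (hg p hp).2 (hg q hq).1
    linarith
  · obtain ⟨b, hb⟩ := hbdd
    refine ⟨b, fun q hq y => ?_⟩
    have h1 : b ≤ F (g q) - ⨆ y, ∑ z, R z y * g q z := hb ⟨g q, (hg q hq).1, rfl⟩
    have h2 : ∑ z, R z y * g q z ≤ ⨆ y, ∑ z, R z y * g q z :=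
      le_ciSup (f := fun y => ∑ z, R z y * g q z) (Set.finite_range _).bddAbove y
    linarith
end
end

section
/- Let Z and Y be finite nonempty sets, R ∈ ℝ^{Z×Y} a reconstruction matrix of some label transition matrix, and F : C → ℝ a closed convex function on a convex subset C of 1_Z^⊥. Then v ↦ F(v) − max_{y∈Y} (R^⊤ v)_y is bounded from below on C if and only if F*(R e_y) < ∞ for every y ∈ Y, where F* is the convex conjugate of F and e_y ∈ ℝ^Y is the standard unit vector concentrated on y. -/
/-! Both conditions say that `⟨R e_y, v⟩ - F v` is bounded above over `v ∈ C`, for each `y`.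
A lower bound `b` of `F v - max_y ⟨R e_y, v⟩` on `C` gives `F*(R e_y) ≤ -b` for every `y`.
Conversely, since `Y` is finite, the values `F*(R e_y) < ∞` have a common real upper bound `M`,
and then `-M` is a lower bound. -/

open scoped BigOperators
noncomputable section

/-- **Proposition**: `F(v) − max_y (R^⊤ v)_y` is bounded below on `C` iff
`F*(R e_y) < ∞` for every weak label `y`. -/
theorem bddBelow_iff_conj_finite {Z Y : Type*} [Fintype Z] [Fintype Y]
    [Nonempty Z] [Nonempty Y] [DecidableEq Z]
    (R : Matrix Z Y ℝ) (hR : ∃ T : Matrix Y Z ℝ, TransitionMatrix T ∧ R * T = 1)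
    (C : Set (Z → ℝ)) (hCsub : C ⊆ SumZero Z) (hCconv : Convex ℝ C)
    (F : (Z → ℝ) → ℝ) (hF : ClosedConvexOn C F) :
    BddBelow ((fun v => F v - ⨆ y, ∑ z, R z y * v z) '' C) ↔
      ∀ y : Y, conj C F (fun z => R z y) < ⊤ := by
  constructor
  · rintro ⟨b, hb⟩ y
    refine lt_of_le_of_lt (iSup_le fun v => ?_) (EReal.coe_lt_top (-b))
    have h1 : b ≤ F v - ⨆ y, ∑ z, R z y * (v : Z → ℝ) z := hb ⟨v, v.2, rfl⟩
    have h2 : ∑ z, R z y * (v : Z → ℝ) z ≤ ⨆ y, ∑ z, R z y * (v : Z → ℝ) z :=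
      le_ciSup (f := fun y => ∑ z, R z y * (v : Z → ℝ) z) (Set.finite_range _).bddAbove y
    exact EReal.coe_le_coe_iff.2 (by linarith)
  · intro h
    choose B hB _ using fun y => EReal.lt_iff_exists_real_btwn.1 (h y)
    obtain ⟨M, hM⟩ := (Set.finite_range B).bddAbove
    refine ⟨-M, ?_⟩
    rintro _ ⟨v, hv, rfl⟩
    have hsup : ⨆ y, ∑ z, R z y * v z ≤ M + F v := ciSup_le fun y => by
      have h1 : (((∑ z, R z y * v z) - F v : ℝ) : EReal) ≤ (B y : EReal) :=
        (le_iSup (fun w : C => (((∑ z, R z y * (w : Z → ℝ) z) - F w : ℝ) : EReal))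
          ⟨v, hv⟩).trans (hB y).le
      have h2 : B y ≤ M := hM ⟨y, rfl⟩
      have h3 := EReal.coe_le_coe_iff.1 h1
      linarith
    change -M ≤ F v - ⨆ y, ∑ z, R z y * v z
    linarith
end
end

section
/- Let Z and Y be finite nonempty sets and T a reconstructible label transition matrix from Z to Y. Then there exists a reconstruction matrix R of T such that R^⊤ 1_Z = 1_Y, where 1_Z ∈ ℝ^Z and 1_Y ∈ ℝ^Y are the all-ones vectors. -/
open scoped BigOperators
noncomputable section

/-- For any reconstructible label transition matrix `T`, there exists a reconstruction
matrix `R` with `R^⊤ 1_Z = 1_Y`, i.e. `Σ_z R_{zy} = 1` for every `y`. -/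
theorem exists_reconstruction_with_ones {Z Y : Type*} [Fintype Z] [Fintype Y]
    [Nonempty Z] [Nonempty Y] [DecidableEq Z]
    (T : Matrix Y Z ℝ) (hT : TransitionMatrix T)
    (hrec : ∃ R : Matrix Z Y ℝ, R * T = 1) :
    ∃ R : Matrix Z Y ℝ, R * T = 1 ∧ ∀ y, ∑ z, R z y = 1 := by
  obtain ⟨R, hR⟩ := hrec
  have hentry : ∀ z w, ∑ y, R z y * T y w = (1 : Matrix Z Z ℝ) z w := fun z w => by
    rw [← hR, Matrix.mul_apply]
  -- Spread the defect of each column sum of `R` equally over the rows. The row vector of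
  -- defects `1_Y^⊤ - 1_Z^⊤ R` annihilates `T`, since `1_Y^⊤ T = 1_Z^⊤ = 1_Z^⊤ R T`.
  have hdefect : ∀ w, ∑ y, (1 - ∑ z, R z y) * T y w = 0 := fun w => by
    simp only [sub_mul, one_mul, Finset.sum_sub_distrib, Finset.sum_mul, hT.2 w]
    rw [Finset.sum_comm]
    simp [hentry, Matrix.one_apply]
  refine ⟨Matrix.of fun z y => R z y + (Fintype.card Z : ℝ)⁻¹ * (1 - ∑ x, R x y), ?_, fun y => ?_⟩
  · ext z w
    simp only [Matrix.mul_apply, Matrix.of_apply, add_mul, Finset.sum_add_distrib, mul_assoc,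
      ← Finset.mul_sum, hdefect, hentry, mul_zero, add_zero]
  · have hcard : (Fintype.card Z : ℝ) ≠ 0 := Nat.cast_ne_zero.mpr Fintype.card_ne_zero
    simp only [Matrix.of_apply]
    rw [Finset.sum_add_distrib, Finset.sum_const, Finset.card_univ, nsmul_eq_mul,
      mul_inv_cancel_left₀ hcard]
    ring
end
end

section
/- Let Z and Y be finite nonempty sets and T a label transition matrix from Z to Y. Then T is injective as a linear map ℝ^Z → ℝ^Y (equivalently, T is reconstructible) if and only if the map p ↦ Tp is injective on the probability simplex P(Z), i.e., for all p, q ∈ P(Z), Tp = Tq implies p = q. -/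
/-!
A matrix with unit column sums preserves total mass (`sum_mulVec_of_transitionMatrix`), so
`T a = T b` forces `a` and `b` to have the same sum. Translating both by one large positive
vector and dividing by the common total mass turns them into two points of the simplex with
the same image; injectivity there gives `a = b`. The converse is restriction.
-/

open scoped BigOperators
noncomputable section

/-- A matrix whose columns sum to 1 preserves the total mass of a vector. -/
theorem sum_mulVec_of_transitionMatrix {Z Y : Type*} [Fintype Z] [Fintype Y]
    {T : Matrix Y Z ℝ} (hT : TransitionMatrix T) (v : Z → ℝ) :
    ∑ y, T.mulVec v y = ∑ z, v z := by
  simp only [Matrix.mulVec, dotProduct]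
  rw [Finset.sum_comm]
  simp only [← Finset.sum_mul, hT.2, one_mul]

/-- A label transition matrix `T` is injective as a linear map (equivalently,
reconstructible) iff `p ↦ Tp` is injective on the probability simplex. -/
theorem injective_iff_injective_on_simplex {Z Y : Type*} [Fintype Z] [Fintype Y]
    (T : Matrix Y Z ℝ) (hT : TransitionMatrix T) :
    Function.Injective T.mulVec ↔
      ∀ p ∈ Simplex Z, ∀ q ∈ Simplex Z, T.mulVec p = T.mulVec q → p = q := by
  refine ⟨fun h p _ q _ hpq => h hpq, fun h a b hab => ?_⟩
  rcases isEmpty_or_nonempty Z with hZ | hZ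
  · exact Subsingleton.elim _ _
  have hsum : ∑ z, a z = ∑ z, b z := by
    rw [← sum_mulVec_of_transitionMatrix hT a, ← sum_mulVec_of_transitionMatrix hT b]
    exact congrArg (fun w : Y → ℝ => ∑ y, w y) hab
  -- The vector `m` dominates the negative parts of both `a` and `b`; the extra `1` makes the
  -- common total mass `S` positive even when `a = b = 0`.
  let m : Z → ℝ := fun z => |a z| + |b z| + 1
  have ha : ∀ z, 0 < (a + m) z := fun z => by
    simp only [m, Pi.add_apply]
    linarith [neg_abs_le (a z), abs_nonneg (b z)]
  have hb : ∀ z, 0 < (b + m) z := fun z => by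
    simp only [m, Pi.add_apply]
    linarith [neg_abs_le (b z), abs_nonneg (a z)]
  have hS : 0 < ∑ z, (a + m) z := Finset.sum_pos (fun z _ => ha z) Finset.univ_nonempty
  have hSb : ∑ z, (b + m) z = ∑ z, (a + m) z := by
    simp only [Pi.add_apply, Finset.sum_add_distrib, hsum]
  generalize hSdef : ∑ z, (a + m) z = S at hS hSb
  have key : S⁻¹ • (a + m) = S⁻¹ • (b + m) := by
    apply h
    · refine ⟨?_, fun z => mul_nonneg (inv_nonneg.2 hS.le) (ha z).le⟩
      simp only [Pi.smul_apply, smul_eq_mul, ← Finset.mul_sum, hSdef]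
      exact inv_mul_cancel₀ hS.ne'
    · refine ⟨?_, fun z => mul_nonneg (inv_nonneg.2 hS.le) (hb z).le⟩
      simp only [Pi.smul_apply, smul_eq_mul, ← Finset.mul_sum, hSb]
      exact inv_mul_cancel₀ hS.ne'
    · rw [Matrix.mulVec_smul, Matrix.mulVec_smul, Matrix.mulVec_add, Matrix.mulVec_add, hab]
  exact add_right_cancel (smul_right_injective _ (inv_ne_zero hS.ne') key)
end
end

section
/- Let Z be a finite set with |Z| = 2 or |Z| = 3, let Y be a nonempty collection of nonempty subsets of Z, and let T ∈ ℝ^{Y×Z} be a partial-label transition matrix, i.e., T has nonnegative entries, every column of T sums to 1, and T_{yz} > 0 implies z ∈ y. If the ambiguity degree is strictly less than 1, i.e., for every pair of distinct labels z, z' ∈ Z one has Σ_{y∈Y : z'∈y} T_{yz} < 1, then T is injective as a linear map ℝ^Z → ℝ^Y (equivalently, the columns of T are linearly independent, so T has a left inverse). -/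
/-!
Let `T x = 0` with `x ≠ 0`. Since the columns of `T` sum to `1`, the entries of `x` sum to `0`, so
`x` has both positive and negative entries. With at most three labels, one of the two signs occurs
exactly once; replacing `x` by `-x` if needed, let `a` be the only label with `0 < x a`, and pick `b` with
`x b < 0`. In any row `y` with `T y b > 0` the negative term at `b` can only be cancelled by the
term at `a`, so `T y a > 0` and hence `a ∈ y`. Thus `a` lies in the partial label almost surely
given the true label `b`, contradicting non-ambiguity (`not_single_positive`).
-/

open scoped BigOperators
noncomputable section

/-- A kernel vector of a non-ambiguous partial-label matrix, over any number of labels, that has a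
negative entry cannot have exactly one positive entry. -/
lemma not_single_positive {Z : Type*} [Fintype Z] [DecidableEq Z]
    (𝒴 : Finset (Finset Z)) (T : Matrix {y // y ∈ 𝒴} Z ℝ)
    (hT0 : ∀ y z, 0 ≤ T y z)
    (hT1 : ∀ z, ∑ y, T y z = 1)
    (hTmem : ∀ (y : {y // y ∈ 𝒴}) (z : Z), 0 < T y z → z ∈ (y : Finset Z))
    (hamb : ∀ z z' : Z, z ≠ z' →
      ∑ y ∈ Finset.univ.filter (fun y : {y // y ∈ 𝒴} => z' ∈ (y : Finset Z)), T y z < 1)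
    (x : Z → ℝ) (hx : T.mulVec x = 0)
    (hpos : (Finset.univ.filter (fun z => 0 < x z)).card = 1)
    (hneg : ∃ b, x b < 0) : False := by
  obtain ⟨a, ha⟩ := Finset.card_eq_one.mp hpos
  obtain ⟨b, hb⟩ := hneg
  have hpos_iff : ∀ z, 0 < x z ↔ z = a := fun z => by
    simpa using congrArg (fun s : Finset Z => z ∈ s) ha
  have hba : b ≠ a := fun h => lt_asymm hb ((hpos_iff b).2 h)
  refine (hamb b a hba).ne ?_
  rw [← hT1 b]
  refine Finset.sum_subset (Finset.filter_subset _ _) fun y _ hy => ?_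
  have hay : a ∉ (y : Finset Z) := by simpa using hy
  have hTa : T y a = 0 :=
    le_antisymm (not_lt.mp fun h => hay (hTmem y a h)) (hT0 y a)
  have hrow : ∑ z, T y z * x z = 0 := congrFun hx y
  have hterm : ∀ z ∈ Finset.univ, T y z * x z ≤ 0 := fun z _ => by
    by_cases hz : z = a
    · simp [hz, hTa]
    · exact mul_nonpos_of_nonneg_of_nonpos (hT0 y z) (not_lt.mp fun h => hz ((hpos_iff z).1 h))
  have hzero := (Finset.sum_eq_zero_iff_of_nonpos hterm).1 hrow b (Finset.mem_univ b)
  exact (mul_eq_zero.mp hzero).resolve_right hb.ne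

/-- **Non-ambiguity implies reconstructibility for 2 or 3 classes**: if `|Z| = 2` or
`|Z| = 3`, `T` is a partial-label transition matrix over a nonempty collection `𝒴` of
nonempty candidate sets, and the ambiguity degree is `< 1` (for every pair of distinct
labels `z ≠ z'`, `Σ_{y : z' ∈ y} T_{yz} < 1`), then `T` is injective as a linear map. -/
theorem nonambiguous_partial_labels_injective {Z : Type*} [Fintype Z] [DecidableEq Z]
    (hcard : Fintype.card Z = 2 ∨ Fintype.card Z = 3)
    (𝒴 : Finset (Finset Z)) (h𝒴 : 𝒴.Nonempty) (hne : ∀ y ∈ 𝒴, y.Nonempty)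
    (T : Matrix {y // y ∈ 𝒴} Z ℝ)
    (hT0 : ∀ y z, 0 ≤ T y z)
    (hT1 : ∀ z, ∑ y, T y z = 1)
    (hTmem : ∀ (y : {y // y ∈ 𝒴}) (z : Z), 0 < T y z → z ∈ (y : Finset Z))
    (hamb : ∀ z z' : Z, z ≠ z' →
      ∑ y ∈ Finset.univ.filter (fun y : {y // y ∈ 𝒴} => z' ∈ (y : Finset Z)), T y z < 1) :
    Function.Injective T.mulVec := by
  intro u v huv
  by_contra huv_ne
  set x : Z → ℝ := u - v with hxdef
  have hx : T.mulVec x = 0 := by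
    rw [hxdef, Matrix.mulVec_sub]
    exact sub_eq_zero.mpr huv
  obtain ⟨c, hc⟩ : ∃ c, x c ≠ 0 := Function.ne_iff.mp (sub_ne_zero.mpr huv_ne)
  -- Summing the rows of `T x = 0` and using that columns of `T` sum to `1`.
  have hsum : ∑ z, x z = 0 := by
    calc ∑ z, x z = ∑ z, ∑ y, T y z * x z := by
          simp only [← Finset.sum_mul, hT1, one_mul]
      _ = ∑ y, T.mulVec x y := Finset.sum_comm
      _ = 0 := by simp [hx]
  obtain ⟨p, -, hp⟩ := Finset.exists_pos_of_sum_zero_of_exists_nonzero x hsum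
    ⟨c, Finset.mem_univ c, hc⟩
  obtain ⟨n, -, hn⟩ := Finset.exists_pos_of_sum_zero_of_exists_nonzero (s := Finset.univ) (-x)
    (by simp [hsum]) ⟨c, Finset.mem_univ c, by simpa using hc⟩
  have hP : 0 < (Finset.univ.filter (fun z => 0 < x z)).card :=
    Finset.card_pos.mpr ⟨p, by simpa using hp⟩
  have hN : 0 < (Finset.univ.filter (fun z => 0 < (-x) z)).card :=
    Finset.card_pos.mpr ⟨n, by simpa using hn⟩
  have hdisj : Disjoint (Finset.univ.filter (fun z => 0 < x z))
      (Finset.univ.filter (fun z => 0 < (-x) z)) :=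
    Finset.disjoint_filter.mpr fun z _ h h' => lt_asymm h (neg_pos.mp h')
  have hle := Finset.card_le_univ (Finset.disjUnion _ _ hdisj)
  rw [Finset.card_disjUnion] at hle
  have hone : (Finset.univ.filter (fun z => 0 < x z)).card = 1 ∨
      (Finset.univ.filter (fun z => 0 < (-x) z)).card = 1 := by omega
  rcases hone with h | h
  · exact not_single_positive 𝒴 T hT0 hT1 hTmem hamb x hx h ⟨n, neg_pos.mp hn⟩
  · exact not_single_positive 𝒴 T hT0 hT1 hTmem hamb (-x) (by rw [Matrix.mulVec_neg, hx, neg_zero])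
      h ⟨p, neg_neg_of_pos hp⟩
end
end

section
/- Let Z and Y be finite nonempty sets, T a label transition matrix from Z to Y, R a reconstruction matrix of T, and let F : 1_Z^⊥ → ℝ be the log-sum-exp function F(v) = log Σ_{z∈Z} e^{v_z}. Suppose there exist v ∈ 1_Z^⊥ and y ∈ Y with (R^⊤ v)_y > max_{z∈Z} v_z. Then λ_{F,R}(t v, y) = −t (R^⊤ v)_y + log Σ_{z∈Z} e^{t v_z} → −∞ as t → ∞; in particular, the function λ_{F,R} is not bounded from below on 1_Z^⊥ × Y. -/
/-!
Log-sum-exp differs from the maximum by at most `log |Z|`: for `t ≥ 0`,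
`log Σ_z e^{t v_z} ≤ log |Z| + t max_z v_z` (`log_sum_exp_le_of_nonneg`). Hence along the ray
`t ↦ t v` the loss is at most `log |Z| + t (max_z v_z - (R^⊤ v)_y)`, which tends to `-∞` because
the slope is negative. The ray stays in `1_Z^⊥`, so the loss has no lower bound there.
-/

open scoped BigOperators
noncomputable section

/-- Log-sum-exp exceeds the maximum by at most the logarithm of the number of terms. The sign of
`t` matters: for `t < 0` the largest of the `t * v z` comes from the minimum of `v`. -/
lemma log_sum_exp_le_of_nonneg {Z : Type*} [Fintype Z] [Nonempty Z] (v : Z → ℝ) {t : ℝ}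
    (ht : 0 ≤ t) :
    Real.log (∑ z, Real.exp (t * v z)) ≤ Real.log (Fintype.card Z) + t * ⨆ z, v z := by
  have hcard : (Fintype.card Z : ℝ) ≠ 0 := by exact_mod_cast Fintype.card_ne_zero
  have hsum : ∑ z, Real.exp (t * v z) ≤ Fintype.card Z * Real.exp (t * ⨆ z, v z) := by
    calc ∑ z, Real.exp (t * v z) ≤ ∑ _z : Z, Real.exp (t * ⨆ z, v z) := by
          gcongr with z
          exact le_ciSup (Set.finite_range v).bddAbove z
      _ = Fintype.card Z * Real.exp (t * ⨆ z, v z) := by simp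
  have hpos : 0 < ∑ z, Real.exp (t * v z) :=
    Finset.sum_pos (fun z _ => Real.exp_pos _) Finset.univ_nonempty
  calc Real.log (∑ z, Real.exp (t * v z))
      ≤ Real.log (Fintype.card Z * Real.exp (t * ⨆ z, v z)) := Real.log_le_log hpos hsum
    _ = Real.log (Fintype.card Z) + t * ⨆ z, v z := by
      rw [Real.log_mul hcard (Real.exp_ne_zero _), Real.log_exp]

/-- **Unboundedness of the backward-corrected log-sum-exp loss** (Example 3): if
`(R^⊤ v)_y > max_z v_z` for some `v ∈ 1_Z^⊥` and `y`, then
`λ_{F,R}(t v, y) = −t (R^⊤ v)_y + log Σ_z e^{t v_z} → −∞` as `t → ∞`;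
in particular `λ_{F,R}` is not bounded from below on `1_Z^⊥ × Y`. -/
theorem logsumexp_loss_unbounded {Z Y : Type*} [Fintype Z] [Fintype Y]
    [Nonempty Z] [DecidableEq Z]
    (T : Matrix Y Z ℝ) (hT : TransitionMatrix T)
    (R : Matrix Z Y ℝ) (hR : R * T = 1)
    (v : Z → ℝ) (hv : v ∈ SumZero Z) (y : Y)
    (hy : (⨆ z, v z) < ∑ z, R z y * v z) :
    Filter.Tendsto
      (fun t : ℝ => -(t * ∑ z, R z y * v z) + Real.log (∑ z, Real.exp (t * v z)))
      Filter.atTop Filter.atBot ∧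
    ¬ BddBelow {r : ℝ | ∃ w ∈ SumZero Z, ∃ y' : Y,
        r = -(∑ z, R z y' * w z) + Real.log (∑ z, Real.exp (w z))} := by
  -- It suffices to bound the loss along the ray by an affine function of negative slope.
  have hlim : Filter.Tendsto
      (fun t : ℝ => -(t * ∑ z, R z y * v z) + Real.log (∑ z, Real.exp (t * v z)))
      Filter.atTop Filter.atBot := by
    have haff : Filter.Tendsto
        (fun t : ℝ => Real.log (Fintype.card Z) + t * ((⨆ z, v z) - ∑ z, R z y * v z))
        Filter.atTop Filter.atBot :=
      Filter.tendsto_atBot_add_const_left _ _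
        (Filter.tendsto_id.atTop_mul_const_of_neg (sub_neg.mpr hy))
    refine Filter.tendsto_atBot_mono' _ ?_ haff
    filter_upwards [Filter.eventually_ge_atTop 0] with t ht
    have hlog := log_sum_exp_le_of_nonneg v ht
    rw [mul_sub]
    linarith
  refine ⟨hlim, ?_⟩
  rintro ⟨b, hb⟩
  obtain ⟨t, ht⟩ := (hlim.eventually (Filter.eventually_lt_atBot b)).exists
  refine absurd (hb ⟨fun z => t * v z, ?_, y, ?_⟩) (not_le.mpr ht)
  · have hv' : ∑ z, v z = 0 := hv
    simp [SumZero, ← Finset.mul_sum, hv']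
  · simp only [Finset.mul_sum, mul_left_comm]
end
end

section
/- Let Z be a finite nonempty set and S : P(Z) → ℝ a convex function. For a subset Z' ⊆ Z, let P_Z(Z') = {p ∈ P(Z) : p_z ≠ 0 for z ∈ Z' and p_z = 0 for z ∉ Z'} denote the corresponding relatively open face of the simplex. Then S is strictly convex on P(Z) if and only if S is strictly convex on P_Z(Z') for every subset Z' of Z. -/
/-!
For distinct `p, q` in the simplex, every proper convex combination of `p` and `q` has support
`supp p ∪ supp q`, so the open segment between them lies in a single relatively open face
(`combo_mem_face`). Given `m = a p + b q`, the midpoints `u` of `p, m` and `v` of `m, q` are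
distinct points of that face with `m = a u + b v`. Strict convexity on the face and convexity on
the simplex give `S m < a S u + b S v ≤ (a S p + b S q + S m) / 2`, hence `S m < a S p + b S q`.
The converse only needs that faces are convex subsets of the simplex.
-/

open scoped BigOperators
noncomputable section

/-- The relatively open face of the simplex determined by a support set `Z'`. -/
def Face {Z : Type*} [Fintype Z] (Z' : Set Z) : Set (Z → ℝ) :=
  {p | p ∈ Simplex Z ∧ ∀ z, (z ∈ Z' → p z ≠ 0) ∧ (z ∉ Z' → p z = 0)}

theorem convex_simplex (Z : Type*) [Fintype Z] : Convex ℝ (Simplex Z) := by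
  intro p hp q hq a b ha hb hab
  refine ⟨?_, fun z => ?_⟩
  · simp [Finset.sum_add_distrib, ← Finset.mul_sum, hp.1, hq.1, hab]
  · have h₁ := mul_nonneg ha (hp.2 z)
    have h₂ := mul_nonneg hb (hq.2 z)
    simpa using add_nonneg h₁ h₂

theorem combo_mem_face {Z : Type*} [Fintype Z] {p q : Z → ℝ} (hp : p ∈ Simplex Z)
    (hq : q ∈ Simplex Z) {a b : ℝ} (ha : 0 < a) (hb : 0 < b) (hab : a + b = 1) :
    a • p + b • q ∈ Face {z | p z ≠ 0 ∨ q z ≠ 0} := by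
  refine ⟨convex_simplex Z hp hq ha.le hb.le hab, fun z => ⟨fun hz h => ?_, fun hz => ?_⟩⟩
  · have h₁ := mul_nonneg ha.le (hp.2 z)
    have h₂ := mul_nonneg hb.le (hq.2 z)
    simp only [Pi.add_apply, Pi.smul_apply, smul_eq_mul] at h
    rcases hz with hz | hz
    · exact (mul_ne_zero ha.ne' hz) (by linarith)
    · exact (mul_ne_zero hb.ne' hz) (by linarith)
  · simp only [Set.mem_ofPred_eq, not_or, not_not] at hz
    simp [hz.1, hz.2]

theorem convex_face {Z : Type*} [Fintype Z] (Z' : Set Z) : Convex ℝ (Face Z') := by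
  rw [convex_iff_forall_pos]
  intro p hp q hq a b ha hb hab
  have h := combo_mem_face hp.1 hq.1 ha hb hab
  refine ⟨h.1, fun z => ⟨fun hz => (h.2 z).1 (Or.inl ((hp.2 z).1 hz)), fun hz => ?_⟩⟩
  simp [(hp.2 z).2 hz, (hq.2 z).2 hz]

/-- **Lemma**: a convex function on the simplex is strictly convex on `P(Z)` iff it is
strictly convex on every relatively open face `P_Z(Z')`, `Z' ⊆ Z`. -/
theorem strictConvexOn_simplex_iff_faces {Z : Type*} [Fintype Z] [Nonempty Z]
    (S : (Z → ℝ) → ℝ) (hS : ConvexOn ℝ (Simplex Z) S) :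
    StrictConvexOn ℝ (Simplex Z) S ↔ ∀ Z' : Set Z, StrictConvexOn ℝ (Face Z') S := by
  constructor
  · exact fun h Z' => h.subset (fun p hp => hp.1) (convex_face Z')
  · intro h
    refine ⟨convex_simplex Z, fun p hp q hq hpq a b ha hb hab => ?_⟩
    have hm := convex_simplex Z hp hq ha.le hb.le hab
    set m := a • p + b • q with hm_def
    set u := (1 / 2 : ℝ) • p + (1 / 2 : ℝ) • m with hu_def
    set v := (1 / 2 : ℝ) • m + (1 / 2 : ℝ) • q with hv_def
    have hu : u ∈ Face {z | p z ≠ 0 ∨ q z ≠ 0} := by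
      have hu' : u = ((1 + a) / 2) • p + (b / 2) • q := by
        rw [hu_def, hm_def]; module
      rw [hu']
      exact combo_mem_face hp hq (by linarith) (by linarith) (by linarith)
    have hv : v ∈ Face {z | p z ≠ 0 ∨ q z ≠ 0} := by
      have hv' : v = (a / 2) • p + ((1 + b) / 2) • q := by
        rw [hv_def, hm_def]; module
      rw [hv']
      exact combo_mem_face hp hq (by linarith) (by linarith) (by linarith)
    have huv : u ≠ v := by
      intro e
      apply hpq
      have e' : (1 / 2 : ℝ) • p = (1 / 2 : ℝ) • q := by
        rw [hu_def, hv_def, add_comm] at e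
        exact add_left_cancel e
      exact smul_right_injective _ (by norm_num : (1 / 2 : ℝ) ≠ 0) e'
    have hmuv : a • u + b • v = m := by
      have e : a • u + b • v = (1 / 2 : ℝ) • (a • p + b • q) + ((a + b) / 2) • m := by
        rw [hu_def, hv_def]; module
      rw [e, hab, ← hm_def]; module
    have h₁ := (h _).2 hu hv huv ha hb hab
    rw [hmuv] at h₁
    have h₂ : S u ≤ _ := hS.2 hp hm (by norm_num : (0 : ℝ) ≤ 1 / 2)
      (by norm_num : (0 : ℝ) ≤ 1 / 2) (by norm_num)
    have h₃ : S v ≤ _ := hS.2 hm hq (by norm_num : (0 : ℝ) ≤ 1 / 2)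
      (by norm_num : (0 : ℝ) ≤ 1 / 2) (by norm_num)
    simp only [smul_eq_mul] at h₁ h₂ h₃ ⊢
    have h₄ := mul_le_mul_of_nonneg_left h₂ ha.le
    have h₅ := mul_le_mul_of_nonneg_left h₃ hb.le
    have h₆ : a * S m + b * S m = S m := by rw [← add_mul, hab, one_mul]
    linarith
end
end
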